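/- arXiv:1703.08435 — 2 statements merged into one kernel-verified Lean document; each statement's English description precedes it below -/
import Mathlib

section
/- Let m ≥ 1 be an integer, r, s > −1 real numbers, and let α = (α_1, …, α_m) and μ = (μ_1, …, μ_m) be m-tuples of nonnegative integers. Then ∫_{[0,1]^m} det( x_j^{α_i + m − i} )_{i,j=1}^m · det( x_j^{μ_i + m − i} )_{i,j=1}^m · ∏_{i=1}^m x_i^r (1−x_i)^s dx_1 ⋯ dx_m = m! · det( B(α_i + μ_j + 2m − i − j + r + 1, s + 1) )_{i,j=1}^m, where B(a,b) = Γ(a)Γ(b)/Γ(a+b) denotes the Euler Beta function (Γ is the real Gamma function), equivalently B(a,b) = ∫_0^1 t^{a−1}(1−t)^{b−1} dt. -/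
open MeasureTheory

/-- The Euler Beta function `B(a,b) = Γ(a)Γ(b)/Γ(a+b)`. -/
noncomputable def eulerBeta (a b : ℝ) : ℝ := Real.Gamma a * Real.Gamma b / Real.Gamma (a + b)

/-!
Expand the second determinant over permutations `τ` and push the factors of the `τ`-term into the
columns of the first determinant. What remains is a determinant whose `j`-th column depends only
on `x j`, so it can be integrated entrywise. Undoing `τ` on the columns of the result produces a
second factor `sign τ`, which cancels the first, so each of the `m!` permutations contributes the
same determinant. This is Andréief's identity; for powers against the Beta weight the entries are
Beta integrals.
-/

section Andreief

variable {ι 𝕜 : Type*} [Fintype ι] [DecidableEq ι] [RCLike 𝕜]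

section DetPi

variable {E : ι → Type*} {mE : ∀ j, MeasurableSpace (E j)} {ν : ∀ j, Measure (E j)}
  [∀ j, SigmaFinite (ν j)] {F : ι → ∀ j, E j → 𝕜}

theorem integrable_det_pi (hF : ∀ i j, Integrable (F i j) (ν j)) :
    Integrable (fun x : ∀ j, E j => (Matrix.of fun i j => F i j (x j)).det) (Measure.pi ν) := by
  simp only [Matrix.det_apply', Matrix.of_apply]
  exact integrable_finsetSum _ fun σ _ =>
    (Integrable.fintype_prod_dep fun j => hF (σ j) j).const_mul _

theorem integral_det_pi (hF : ∀ i j, Integrable (F i j) (ν j)) :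
    ∫ x, (Matrix.of fun i j => F i j (x j)).det ∂Measure.pi ν =
      (Matrix.of fun i j => ∫ y, F i j y ∂ν j).det := by
  simp only [Matrix.det_apply', Matrix.of_apply]
  rw [integral_finsetSum _ fun σ _ =>
    (Integrable.fintype_prod_dep fun j => hF (σ j) j).const_mul _]
  refine Finset.sum_congr rfl fun σ _ => ?_
  rw [integral_const_mul, integral_fintype_prod_eq_prod fun j => F (σ j) j]

end DetPi

theorem det_mul_det_eq_sum_perm {R : Type*} [CommRing R] (A B : Matrix ι ι R) :
    A.det * B.det =
      ∑ τ : Equiv.Perm ι, (Equiv.Perm.sign τ : R) *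
        (Matrix.of fun i j => A i j * B (τ j) j).det := by
  rw [Matrix.det_apply' B, Finset.mul_sum]
  refine Finset.sum_congr rfl fun τ _ => ?_
  have hcol := Matrix.det_mul_row (fun j => B (τ j) j) A
  simp only [mul_comm (B _ _)] at hcol
  rw [hcol]
  ring

theorem integral_det_mul_det {E : Type*} [MeasurableSpace E] {ν : Measure E} [SigmaFinite ν]
    {f g : ι → E → 𝕜} (hfg : ∀ i j, Integrable (fun y => f i y * g j y) ν) :
    ∫ x : ι → E, (Matrix.of fun i j => f i (x j)).det * (Matrix.of fun i j => g i (x j)).det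
        ∂Measure.pi (fun _ => ν) =
      (Nat.factorial (Fintype.card ι) : 𝕜) *
        (Matrix.of fun i j => ∫ y, f i y * g j y ∂ν).det := by
  set M : Matrix ι ι 𝕜 := Matrix.of fun i j => ∫ y, f i y * g j y ∂ν
  have hterm (τ : Equiv.Perm ι) :
      ∫ x : ι → E, (Equiv.Perm.sign τ : 𝕜) *
        (Matrix.of fun i j => f i (x j) * g (τ j) (x j)).det ∂Measure.pi (fun _ => ν) = M.det := by
    calc
      _ = (Equiv.Perm.sign τ : 𝕜) * (M.submatrix id τ).det := by
        rw [integral_const_mul,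
          integral_det_pi (F := fun i j y => f i y * g (τ j) y) fun i j => hfg i (τ j)]
        rfl
      _ = M.det := by
        rw [Matrix.det_permute', ← mul_assoc, ← Int.cast_mul, ← Units.val_mul,
          Int.units_mul_self, Units.val_one, Int.cast_one, one_mul]
  simp only [det_mul_det_eq_sum_perm, Matrix.of_apply]
  rw [integral_finsetSum _ fun τ _ => (integrable_det_pi
    (F := fun i j y => f i y * g (τ j) y) fun i j => hfg i (τ j)).const_mul _]
  simp only [hterm, Finset.sum_const, Finset.card_univ, Fintype.card_perm, nsmul_eq_mul]

end Andreief

section BetaIntegral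

variable {a b : ℝ}

theorem ofReal_betaIntegrand {x : ℝ} (hx : x ∈ Set.Icc (0 : ℝ) 1) :
    ((x ^ (a - 1) * (1 - x) ^ (b - 1) : ℝ) : ℂ) =
      (x : ℂ) ^ ((a : ℂ) - 1) * (1 - (x : ℂ)) ^ ((b : ℂ) - 1) := by
  rw [Complex.ofReal_mul, Complex.ofReal_cpow hx.1, Complex.ofReal_cpow (sub_nonneg.2 hx.2)]
  push_cast
  rfl

theorem integrableOn_rpow_mul_one_sub_rpow (ha : 0 < a) (hb : 0 < b) :
    IntegrableOn (fun x : ℝ => x ^ (a - 1) * (1 - x) ^ (b - 1)) (Set.Ioc 0 1) := by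
  have hconv := Complex.betaIntegral_convergent (u := a) (v := b)
    (by rwa [Complex.ofReal_re]) (by rwa [Complex.ofReal_re])
  rw [intervalIntegrable_iff_integrableOn_Ioc_of_le zero_le_one] at hconv
  refine IntegrableOn.congr_fun hconv.re (fun x hx => ?_) measurableSet_Ioc
  rw [← ofReal_betaIntegrand (Set.Ioc_subset_Icc_self hx)]
  exact Complex.ofReal_re _

theorem setIntegral_rpow_mul_one_sub_rpow (ha : 0 < a) (hb : 0 < b) :
    ∫ x in Set.Ioc (0 : ℝ) 1, x ^ (a - 1) * (1 - x) ^ (b - 1) = eulerBeta a b := by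
  have hbeta : eulerBeta a b = (Complex.betaIntegral a b).re :=
    ProbabilityTheory.beta_eq_betaIntegralReal a b ha hb
  rw [hbeta, Complex.betaIntegral, intervalIntegral.integral_of_le zero_le_one,
    ← setIntegral_congr_fun measurableSet_Ioc fun x hx =>
      ofReal_betaIntegrand (Set.Ioc_subset_Icc_self hx),
    integral_complex_ofReal, Complex.ofReal_re]

end BetaIntegral

theorem integral_two_schur_eq_det_beta_general {ι : Type*} [Fintype ι] [DecidableEq ι]
    {r s : ℝ} (hs : -1 < s) {a b : ι → ℝ} (hab : ∀ i j, -1 < a i + b j + r) :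
    ∫ x : ι → ℝ,
        (Matrix.of fun i j => x j ^ a i).det * (Matrix.of fun i j => x j ^ b i).det *
          ∏ i, x i ^ r * (1 - x i) ^ s
        ∂(Measure.pi fun _ => volume.restrict (Set.Ioc (0 : ℝ) 1)) =
      (Nat.factorial (Fintype.card ι) : ℝ) *
        (Matrix.of fun i j => eulerBeta (a i + b j + r + 1) (s + 1)).det := by
  have hs' : 0 < s + 1 := by linarith
  have hab' (i j : ι) : 0 < a i + b j + r + 1 := by linarith [hab i j]
  have hentry (i j : ι) :
      Set.EqOn (fun y : ℝ => y ^ (a i + b j + r + 1 - 1) * (1 - y) ^ (s + 1 - 1))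
        (fun y => y ^ a i * (y ^ r * (1 - y) ^ s * y ^ b j)) (Set.Ioc 0 1) := fun y hy => by
    simp only [add_sub_cancel_right, Real.rpow_add hy.1]
    ring
  have hint (i j : ι) := (integrableOn_rpow_mul_one_sub_rpow (hab' i j) hs').congr_fun
    (hentry i j) measurableSet_Ioc
  have hweight (x : ι → ℝ) :
      (Matrix.of fun i j => x j ^ b i).det * ∏ j, x j ^ r * (1 - x j) ^ s =
        (Matrix.of fun i j => x j ^ r * (1 - x j) ^ s * x j ^ b i).det := by
    rw [mul_comm, ← Matrix.det_mul_row]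
    rfl
  simp only [mul_assoc (Matrix.det _), hweight]
  rw [integral_det_mul_det (f := fun i y => y ^ a i)
    (g := fun j y => y ^ r * (1 - y) ^ s * y ^ b j) hint]
  simp only [← setIntegral_rpow_mul_one_sub_rpow (hab' _ _) hs',
    setIntegral_congr_fun measurableSet_Ioc (hentry _ _)]

/-- For `m ≥ 1`, `r, s > -1` and `m`-tuples of nonnegative integers `α, μ`, the integral over
`[0,1]^m` of `det(x_j^{α_i + m - i}) · det(x_j^{μ_i + m - i}) · ∏_i x_i^r (1 - x_i)^s` equals
`m! · det(B(α_i + μ_j + 2m - i - j + r + 1, s + 1))`, where `B` is the Euler Beta function.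
Indices `i, j : Fin m` correspond to `i + 1, j + 1 ∈ {1, …, m}`, so
`2m - i - j` reads `(m - 1 - i.val) + (m - 1 - j.val)`. -/
theorem integral_two_schur_eq_det_beta (m : ℕ) (hm : 1 ≤ m)
    (r s : ℝ) (hr : -1 < r) (hs : -1 < s) (α μ : Fin m → ℕ) :
    ∫ x : Fin m → ℝ,
        (Matrix.of fun i j : Fin m => x j ^ (α i + (m - 1 - i.val))).det *
          (Matrix.of fun i j : Fin m => x j ^ (μ i + (m - 1 - i.val))).det *
          ∏ i : Fin m, x i ^ r * (1 - x i) ^ s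
        ∂(Measure.pi fun _ : Fin m => volume.restrict (Set.Ioc (0:ℝ) 1))
      = (Nat.factorial m : ℝ) *
        (Matrix.of fun i j : Fin m =>
          eulerBeta (((α i + μ j + (m - 1 - i.val) + (m - 1 - j.val) + 1 : ℕ) : ℝ) + r)
            (s + 1)).det := by
  have h := integral_two_schur_eq_det_beta_general hs
    (a := fun i : Fin m => ((α i + (m - 1 - i.val) : ℕ) : ℝ))
    (b := fun j : Fin m => ((μ j + (m - 1 - j.val) : ℕ) : ℝ))
    fun _ _ => hr.trans_le (le_add_of_nonneg_left (by positivity))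
  simp only [Real.rpow_natCast, Fintype.card_fin] at h
  convert h using 7
  simp only [Nat.cast_add, Nat.cast_one]
  ring
end

section
/- Let a ≥ 1 and b ≥ 0 be integers and set τ = (a,1^b). Let p, d : ℕ → ℕ be sequences with m ≤ p(m) ≤ d(m) for all m and lim_{m→∞} p(m)/d(m) = θ ∈ (0,1). Then lim_{m→∞} [ 1 + ∑_{c=1}^a ∑_{e=0}^b (−1)^{c+e} · binom(τ,(c,1^e)) · C_{(c,1^e)}^τ(d(m)) / ∏_{i=1}^{e+1} (p(m) − i + 1)_{ν_i} ] = (1 − 1/θ)^{a+b}, where ν = (c,1^e) (so ν_1 = c, ν_2 = ⋯ = ν_{e+1} = 1) and (z)_n = z(z+1)⋯(z+n−1) denotes the rising factorial. -/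
open Filter

/-- The generalized binomial coefficient `binom(τ, μ)` for the hooks `τ = (a, 1^b)` and
`μ = (c, 1^e)` with `1 ≤ c ≤ a`, `0 ≤ e ≤ b`:
`binom(τ,μ) = C(a-1, a-c) · C(b, b-e) · [(a+e)(b+c) - (a-c)(b-e)] / (c+e)²`. -/
noncomputable def hookBinom (a b c e : ℕ) : ℝ :=
  (Nat.choose (a - 1) (a - c) : ℝ) * (Nat.choose b (b - e) : ℝ) *
    (((a : ℝ) + e) * ((b : ℝ) + c) - ((a : ℝ) - c) * ((b : ℝ) - e)) / ((c : ℝ) + e) ^ 2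

/-- For the hooks `τ = (a, 1^b)`, `μ = (c, 1^e)`, the polynomial
`C_μ^τ(X) = (X + (a(a-1) - b(b+1))/(a+b)) · ∏_{i=2}^c (X + a + i - 2) · ∏_{i=1}^e (X - b - i)`. -/
noncomputable def hookC (a b c e : ℕ) (X : ℝ) : ℝ :=
  (X + ((a : ℝ) * ((a : ℝ) - 1) - (b : ℝ) * ((b : ℝ) + 1)) / ((a : ℝ) + (b : ℝ))) *
    (∏ i ∈ Finset.Icc 2 c, (X + (a : ℝ) + (i : ℝ) - 2)) *
    ∏ i ∈ Finset.Icc 1 e, (X - (b : ℝ) - (i : ℝ))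

/-- The generalized Pochhammer symbol `∏_{i=1}^{e+1} (p - i + 1)_{ν_i}` for the hook
`ν = (c, 1^e)` (so `ν_1 = c` and `ν_2 = ⋯ = ν_{e+1} = 1`), where
`(z)_n = z(z+1)⋯(z+n-1)` is the rising factorial. -/
noncomputable def hookPoch (p c e : ℕ) : ℝ :=
  ∏ i ∈ Finset.Icc 1 (e + 1),
    Polynomial.eval ((p : ℝ) - (i : ℝ) + 1) (ascPochhammer ℝ (if i = 1 then c else 1))

/-!
As `X → ∞` both `C_μ^τ(X)` and the generalized Pochhammer symbol of `X` are asymptotic to `X ^ |μ|`,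
so the quotient of their values at `d(m)` and `p(m)` tends to `(1/θ) ^ |μ|`, and the limit is
`∑_μ binom(τ, μ) (-1/θ) ^ |μ|`, the empty `μ` contributing `1`. On hooks the generalized binomial
coefficient is `C(a-1, c-1) · C(b, e) · |τ| / |μ|`; by the Vandermonde convolution the coefficients
with `|μ| = k + 1` add up to `C(|τ|-1, k) · |τ| / (k + 1) = C(|τ|, k + 1)`, and the binomial theorem
gives `(1 - 1/θ) ^ |τ|`.
-/

open Asymptotics Bornology Finset Polynomial Topology

section HookBinomialTheorem

lemma sum_choose_nsmul_sum_choose_nsmul {M : Type*} [AddCommMonoid M] (n b : ℕ) (f : ℕ → M) :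
    ∑ j ∈ range (n + 1), n.choose j • ∑ e ∈ range (b + 1), b.choose e • f (j + e) =
      ∑ k ∈ range (n + b + 1), (n + b).choose k • f k := by
  induction n generalizing f with
  | zero => simp
  | succ n ih =>
    calc ∑ j ∈ range (n + 2), (n + 1).choose j • ∑ e ∈ range (b + 1), b.choose e • f (j + e)
      _ = ∑ k ∈ range (n + b + 1), (n + b).choose k • f k +
            ∑ k ∈ range (n + b + 1), (n + b).choose k • f (k + 1) := by
        simp only [sum_choose_succ_nsmul (fun j _ => ∑ e ∈ range (b + 1), b.choose e • f (j + e)),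
          ih, ← ih fun k => f (k + 1), Nat.add_right_comm _ 1]
      _ = ∑ k ∈ range (n + b + 2), (n + b + 1).choose k • f k :=
        (sum_choose_succ_nsmul (fun k _ => f k) (n + b)).symm
      _ = ∑ k ∈ range (n + 1 + b + 1), (n + 1 + b).choose k • f k := by
        rw [Nat.add_right_comm n 1 b]

lemma one_add_sum_choose_mul_div_mul_pow {K : Type*} [Field K] [CharZero K] (N : ℕ) (x : K) :
    1 + ∑ k ∈ range (N + 1), (N.choose k : K) * ((N + 1) / (k + 1) * x ^ (k + 1)) =
      (1 + x) ^ (N + 1) := by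
  have habsorb (k : ℕ) : (N.choose k * ((N + 1) / (k + 1)) : K) = (N + 1).choose (k + 1) := by
    rw [← mul_div_assoc, div_eq_iff k.cast_add_one_ne_zero, mul_comm]
    exact_mod_cast N.add_one_mul_choose_eq k
  simp only [← mul_assoc, habsorb]
  rw [add_comm 1 x, add_pow, sum_range_succ' _ (N + 1)]
  simp [mul_comm, add_comm]

lemma hookBinom_add_one {n b j e : ℕ} (hj : j ≤ n) (he : e ≤ b) :
    hookBinom (n + 1) b (j + 1) e =
      n.choose j * b.choose e * ((n + b + 1 : ℝ) / (j + e + 1)) := by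
  have hsize : (j + 1 + e : ℝ) ≠ 0 := by positivity
  rw [hookBinom, Nat.add_sub_add_right, Nat.sub_zero, Nat.add_sub_add_right,
    Nat.choose_symm hj, Nat.choose_symm he]
  push_cast
  field_simp
  ring

theorem one_add_sum_hookBinom_mul_pow {a : ℕ} (ha : 1 ≤ a) (b : ℕ) (x : ℝ) :
    1 + ∑ c ∈ Icc 1 a, ∑ e ∈ range (b + 1), hookBinom a b c e * x ^ (c + e) =
      (1 + x) ^ (a + b) := by
  obtain ⟨n, rfl⟩ := Nat.exists_eq_add_of_le' ha
  have hcoeff {j e : ℕ} (hj : j ∈ range (n + 1)) (he : e ∈ range (b + 1)) :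
      hookBinom (n + 1) b (j + 1) e * x ^ (j + 1 + e) = n.choose j • b.choose e •
        (((n + b : ℕ) + 1 : ℝ) / ((j + e : ℕ) + 1) * x ^ (j + e + 1)) := by
    rw [hookBinom_add_one (mem_range_succ_iff.1 hj) (mem_range_succ_iff.1 he),
      Nat.add_right_comm j 1 e]
    push_cast [nsmul_eq_mul]
    ring
  calc 1 + ∑ c ∈ Icc 1 (n + 1), ∑ e ∈ range (b + 1), hookBinom (n + 1) b c e * x ^ (c + e)
    _ = 1 + ∑ j ∈ range (n + 1), ∑ e ∈ range (b + 1),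
          hookBinom (n + 1) b (j + 1) e * x ^ (j + 1 + e) := by
      rw [← Ico_add_one_right_eq_Icc, sum_Ico_eq_sum_range]
      simp only [Nat.add_sub_cancel, Nat.add_comm 1]
    _ = 1 + ∑ j ∈ range (n + 1), n.choose j • ∑ e ∈ range (b + 1), b.choose e •
          (((n + b : ℕ) + 1 : ℝ) / ((j + e : ℕ) + 1) * x ^ (j + e + 1)) := by
      simp only [smul_sum]
      exact congrArg _ <| sum_congr rfl fun j hj => sum_congr rfl fun e he => hcoeff hj he
    _ = 1 + ∑ k ∈ range (n + b + 1), (n + b).choose k •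
          (((n + b : ℕ) + 1 : ℝ) / (k + 1) * x ^ (k + 1)) := by
      rw [sum_choose_nsmul_sum_choose_nsmul n b fun k =>
        ((n + b : ℕ) + 1 : ℝ) / (k + 1) * x ^ (k + 1)]
    _ = (1 + x) ^ (n + b + 1) := by
      simpa only [nsmul_eq_mul] using one_add_sum_choose_mul_div_mul_pow (n + b) x
    _ = (1 + x) ^ (n + 1 + b) := by rw [Nat.add_right_comm]

end HookBinomialTheorem

section Asymptotics

lemma eval_add_const_isEquivalent_pow_of_monic {R : Type*} [NormedCommRing R] [NormMulClass R]
    {P : R[X]} (hP : P.Monic) (k : R) :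
    (fun x => P.eval (x + k)) ~[cobounded R] fun x => x ^ P.natDegree := by
  simpa [taylor_eval, hP.leadingCoeff, add_comm] using
    (taylor k P).isEquivalent_cobounded_leading_monomial

lemma tendsto_cobounded_of_tendsto_div {ι 𝕜 : Type*} [NormedDivisionRing 𝕜] {l : Filter ι}
    {f g : ι → 𝕜} {θ : 𝕜} (hf : Tendsto f l (cobounded 𝕜)) (hθ : θ ≠ 0)
    (hfg : Tendsto (fun i => f i / g i) l (𝓝 θ)) : Tendsto g l (cobounded 𝕜) := by
  have hne : ∀ᶠ i in l, f i ≠ 0 ∧ g i ≠ 0 := (hfg.eventually_ne hθ).mono fun _ => div_ne_zero_iff.1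
  have hmul : Tendsto (fun i => (f i)⁻¹ * (f i / g i)) l (𝓝 0) := by
    simpa using (tendsto_inv₀_cobounded.comp hf).mul hfg
  have hinv : Tendsto (fun i => (g i)⁻¹) l (𝓝[≠] 0) := by
    refine tendsto_nhdsWithin_iff.2 ⟨hmul.congr' ?_, hne.mono fun i hi => inv_ne_zero hi.2⟩
    filter_upwards [hne] with i hi
    rw [div_eq_mul_inv, inv_mul_cancel_left₀ hi.1]
  simpa [Function.comp_def] using tendsto_inv₀_nhdsNE_zero.comp hinv

lemma hookC_isEquivalent_pow (a b : ℕ) {c : ℕ} (hc : 1 ≤ c) (e : ℕ) :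
    hookC a b c e ~[cobounded ℝ] fun x => x ^ (c + e) := by
  have hadd (k : ℝ) : (fun x : ℝ => x + k) ~[cobounded ℝ] fun x => x := by
    simpa using eval_add_const_isEquivalent_pow_of_monic (monic_X (R := ℝ)) k
  have hprod (s : Finset ℕ) (k : ℕ → ℝ) :
      (fun x : ℝ => ∏ i ∈ s, (x + k i)) ~[cobounded ℝ] fun x => x ^ #s := by
    simpa using IsEquivalent.finsetProd fun i (_ : i ∈ s) => hadd (k i)
  convert ((hadd ((a * (a - 1) - b * (b + 1)) / (a + b))).mul
    (hprod (Icc 2 c) fun i => a + i - 2)).mul (hprod (Icc 1 e) fun i => -b - i) using 1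
  · ext x
    simp only [hookC, Pi.mul_apply, sub_eq_add_neg, add_assoc]
  · ext x
    simp only [Pi.mul_apply, Nat.card_Icc, ← pow_succ', ← pow_add]
    congr 1
    lia

lemma hookPoch_isEquivalent_pow (c e : ℕ) :
    (fun p => hookPoch p c e) ~[atTop] fun p => (p : ℝ) ^ (c + e) := by
  have hfactor (n i : ℕ) : (fun p : ℕ => (ascPochhammer ℝ n).eval ((p : ℝ) - i + 1)) ~[atTop]
      fun p => (p : ℝ) ^ n := by
    simpa [Function.comp_def, sub_add_eq_add_sub, add_sub_assoc] using
      (eval_add_const_isEquivalent_pow_of_monic (monic_ascPochhammer ℝ n) (1 - i)).comp_tendsto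
        tendsto_natCast_atTop_cobounded
  have hsize : ∑ i ∈ Icc 1 (e + 1), (if i = 1 then c else 1) = c + e := by
    rw [← add_sum_Ioc_eq_sum_Icc (by lia), if_pos rfl,
      sum_congr rfl fun i hi => if_neg (mem_Ioc.1 hi).1.ne']
    simp
  simpa only [hookPoch, prod_pow_eq_pow_sum, hsize] using
    IsEquivalent.finsetProd fun i (_ : i ∈ Icc 1 (e + 1)) => hfactor (if i = 1 then c else 1) i

end Asymptotics

section Limit

variable {ι : Type*} {l : Filter ι} {p : ι → ℕ} {d : ι → ℝ} {θ : ℝ}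

lemma tendsto_hookC_div_hookPoch (a b : ℕ) {c : ℕ} (hc : 1 ≤ c) (e : ℕ)
    (hp : Tendsto p l atTop) (hθ : θ ≠ 0) (hlim : Tendsto (fun m => (p m : ℝ) / d m) l (𝓝 θ)) :
    Tendsto (fun m => hookC a b c e (d m) / hookPoch (p m) c e) l (𝓝 ((1 / θ) ^ (c + e))) := by
  have hd : Tendsto d l (cobounded ℝ) :=
    tendsto_cobounded_of_tendsto_div (tendsto_natCast_atTop_cobounded.comp hp) hθ hlim
  have hequiv : (fun m => hookC a b c e (d m) / hookPoch (p m) c e) ~[l]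
      fun m => d m ^ (c + e) / (p m : ℝ) ^ (c + e) :=
    ((hookC_isEquivalent_pow a b hc e).comp_tendsto hd).div
      ((hookPoch_isEquivalent_pow c e).comp_tendsto hp)
  refine hequiv.symm.tendsto_nhds ?_
  simpa [div_pow] using (hlim.inv₀ hθ).pow (c + e)

theorem jacobi_special_value_limit_general {a : ℕ} (ha : 1 ≤ a) (b : ℕ)
    (hp : Tendsto p l atTop) (hθ : θ ≠ 0) (hlim : Tendsto (fun m => (p m : ℝ) / d m) l (𝓝 θ)) :
    Tendsto
      (fun m => 1 + ∑ c ∈ Icc 1 a, ∑ e ∈ range (b + 1),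
        (-1 : ℝ) ^ (c + e) * hookBinom a b c e * hookC a b c e (d m) / hookPoch (p m) c e)
      l (𝓝 ((1 - 1 / θ) ^ (a + b))) := by
  rw [sub_eq_add_neg, ← one_add_sum_hookBinom_mul_pow ha b]
  refine tendsto_const_nhds.add <| tendsto_finsetSum _ fun c hc => tendsto_finsetSum _ fun e _ => ?_
  have hterm := (tendsto_hookC_div_hookPoch a b (mem_Icc.1 hc).1 e hp hθ hlim).const_mul
    ((-1) ^ (c + e) * hookBinom a b c e)
  convert hterm using 2
  · ring
  · rw [neg_pow (1 / θ)]
    ring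

end Limit

/-- Let `a ≥ 1`, `b ≥ 0` and `τ = (a, 1^b)`.  If `m ≤ p(m) ≤ d(m)` and
`p(m)/d(m) → θ ∈ (0,1)`, then
`1 + ∑_{c=1}^a ∑_{e=0}^b (-1)^{c+e} binom(τ,(c,1^e)) C_{(c,1^e)}^τ(d(m))
    / ∏_{i=1}^{e+1} (p(m) - i + 1)_{ν_i}  →  (1 - 1/θ)^{a+b}` as `m → ∞`,
i.e. the value at `1^m` of the normalized symmetric Jacobi polynomial `U_τ` tends to
`(1 - 1/θ)^{|τ|}`. -/
theorem jacobi_special_value_limit (a b : ℕ) (ha : 1 ≤ a)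
    (p d : ℕ → ℕ) (hpm : ∀ m, m ≤ p m) (hpd : ∀ m, p m ≤ d m)
    (θ : ℝ) (hθ0 : 0 < θ) (hθ1 : θ < 1)
    (hlim : Tendsto (fun m => (p m : ℝ) / (d m : ℝ)) atTop (nhds θ)) :
    Tendsto
      (fun m => 1 + ∑ c ∈ Finset.Icc 1 a, ∑ e ∈ Finset.range (b + 1),
        (-1 : ℝ) ^ (c + e) * hookBinom a b c e * hookC a b c e (d m) / hookPoch (p m) c e)
      atTop (nhds ((1 - 1 / θ) ^ (a + b))) := by
  exact jacobi_special_value_limit_general ha b (tendsto_atTop_mono hpm tendsto_id) hθ0.ne' hlim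
end
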